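/- Let H be a well-formed complete history and let lt assign to each event of H a key (logical time, process identifier) ∈ ℕ × ℕ, where the process identifier component equals the process at which the event occurs, such that distinct events receive distinct keys and, within each process subhistory H|p, the logical-time components are strictly increasing along the subhistory. Let H^lt be the sequence consisting of the same events as H, sorted in increasing lexicographic order of their keys. If for every register x the register subhistory H^lt|x is linearizable, then H is sequentially consistent. -/

import Mathlib

/-- An event of a read/write register operation execution: it is either the
invocation (`isInv = true`) or the response (`isInv = false`) of an operation,
identified by an operation identifier `op`, occurring at process `proc`,
targeting register `reg`.  `isRead` tells whether the operation is a read or a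
write, and `value` is the value written (for a write) resp. returned (for a
read). -/
structure Event where
  op : ℕ
  proc : ℕ
  reg : ℕ
  isRead : Bool
  value : ℤ
  isInv : Bool
deriving DecidableEq

/-- A history is a finite sequence of events. -/
abbrev Hist := List Event

/-- `H|p`: the process subhistory of `H`, i.e. the subsequence of events
occurring at process `p`. -/
def procSub (H : Hist) (p : ℕ) : Hist := H.filter (fun e => e.proc = p)

/-- `H|x`: the register subhistory of `H`, i.e. the subsequence of events of
operations targeting register `x`. -/
def regSub (H : Hist) (x : ℕ) : Hist := H.filter (fun e => e.reg = x)

/-- `e2` is the response event matching the invocation event `e1`. -/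
def Matches (e1 e2 : Event) : Prop :=
  e1.isInv = true ∧ e2.isInv = false ∧ e1.op = e2.op ∧ e1.proc = e2.proc ∧
    e1.reg = e2.reg ∧ e1.isRead = e2.isRead ∧ e1.value = e2.value

/-- A history is sequential if its first event is an invocation and every
invocation event (except possibly the last event) is immediately followed by
the matching response event. -/
inductive IsSequential : Hist → Prop
  | nil : IsSequential []
  | single (e : Event) : e.isInv = true → IsSequential [e]
  | cons (e1 e2 : Event) (rest : Hist) :
      Matches e1 e2 → IsSequential rest → IsSequential (e1 :: e2 :: rest)

/-- No two distinct events of a history are the invocation of the same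
operation, nor the response of the same operation. -/
def UniqueEvents (H : Hist) : Prop :=
  H.Pairwise (fun e1 e2 => ¬(e1.op = e2.op ∧ e1.isInv = e2.isInv))

/-- All events of one and the same operation agree on the process, register,
operation type and value. -/
def Coherent (H : Hist) : Prop :=
  ∀ e1 ∈ H, ∀ e2 ∈ H, e1.op = e2.op →
    e1.proc = e2.proc ∧ e1.reg = e2.reg ∧ e1.isRead = e2.isRead ∧ e1.value = e2.value

/-- A history is well-formed if every process subhistory is sequential
(together with the bookkeeping conditions making operations well-defined). -/
def WellFormed (H : Hist) : Prop :=
  UniqueEvents H ∧ Coherent H ∧ ∀ p : ℕ, IsSequential (procSub H p)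

/-- A history is complete if every invocation event has a matching response
event. -/
def Complete (H : Hist) : Prop :=
  ∀ e ∈ H, e.isInv = true → ∃ e' ∈ H, Matches e e'

/-- `H ≃ H'`: two histories are equivalent iff `H|p = H'|p` for every
process `p`. -/
def HEquiv (H H' : Hist) : Prop := ∀ p : ℕ, procSub H p = procSub H' p

/-- Operation `o1` precedes operation `o2` in history `H`
(`o1 <_H o2`): the response event of `o1` occurs before the invocation event
of `o2` in `H`. -/
def OpBefore (H : Hist) (o1 o2 : ℕ) : Prop :=
  ∃ i j : Fin H.length, i < j ∧
    (H.get i).op = o1 ∧ (H.get i).isInv = false ∧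
    (H.get j).op = o2 ∧ (H.get j).isInv = true

/-- A sequential history is legal if every read of a register returns the
value written by the closest preceding write to that register, or the initial
value `0` if no such write exists. -/
def Legal (S : Hist) : Prop :=
  ∀ k : Fin S.length, (S.get k).isInv = true → (S.get k).isRead = true →
    ((∃ j : Fin S.length, j < k ∧ (S.get j).isInv = true ∧ (S.get j).isRead = false ∧
        (S.get j).reg = (S.get k).reg ∧ (S.get j).value = (S.get k).value ∧
        ∀ l : Fin S.length, j < l → l < k → (S.get l).isInv = true →
          (S.get l).isRead = false → (S.get l).reg ≠ (S.get k).reg) ∨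
      ((S.get k).value = 0 ∧
        ∀ j : Fin S.length, j < k → (S.get j).isInv = true →
          (S.get j).isRead = false → (S.get j).reg ≠ (S.get k).reg))

/-- `SC H`: history `H` is sequentially consistent iff there is a legal
sequential history `S` with `S ≃ H`. -/
def SC (H : Hist) : Prop :=
  ∃ S : Hist, IsSequential S ∧ Legal S ∧ HEquiv S H

/-- `LIN H`: history `H` is linearizable iff there is a legal sequential
history `S` with `S ≃ H` such that `o1 <_H o2` implies `o1 <_S o2` for all
operations `o1, o2` of `H`. -/
def LIN (H : Hist) : Prop :=
  ∃ S : Hist, IsSequential S ∧ Legal S ∧ HEquiv S H ∧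
    ∀ o1 o2 : ℕ, OpBefore H o1 o2 → OpBefore S o1 o2

/-- The lexicographic order on keys `(logical time, process identifier)`. -/
def KeyLt (k1 k2 : ℕ × ℕ) : Prop := Prod.Lex (· < ·) (· < ·) k1 k2

/-- `IsLtHistory H lt Hlt`: `Hlt` is the logical-time history `H^lt`
corresponding to `H`, i.e. the sequence consisting of the same events as `H`,
sorted in increasing lexicographic order of their keys
`lt e = (logical time of e, process identifier of e)`. -/
def IsLtHistory (H : Hist) (lt : Event → ℕ × ℕ) (Hlt : Hist) : Prop :=
  Hlt.Perm H ∧ Hlt.Pairwise (fun e1 e2 => KeyLt (lt e1) (lt e2))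

/-!
Logical time increases along each process, so `H^lt ≃ H`, and it is enough to linearize `H^lt`.
Linearizability is local (Herlihy and Wing): given a linearization of each register subhistory of a
history `L`, let the linearization point of an operation be the latest invocation in `L` among the
operations up to it in the linearization of its register. This point lies between the invocation of
the operation and its response. Executing all operations in the order of these points therefore
extends the real-time order of `L`, and it restricts to the given linearization on each register, so
it is legal.
-/

open scoped List

section Lists

variable {β : Type*} {l : List β} {a b : β}

theorem pair_sublist_iff_exists_get :
    [a, b] <+ l ↔ ∃ i j : Fin l.length, i < j ∧ l.get i = a ∧ l.get j = b := by
  constructor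
  · intro h
    obtain ⟨f, hf⟩ := List.sublist_iff_exists_fin_orderEmbedding_get_eq.1 h
    exact ⟨f 0, f 1, f.strictMono Fin.zero_lt_one, (hf 0).symm, (hf 1).symm⟩
  · rintro ⟨i, j, hij, rfl, rfl⟩
    have hpairs : l.Pairwise fun a b => [a, b] <+ l := List.pairwise_iff_forall_sublist.2 id
    exact List.pairwise_iff_get.1 hpairs i j hij

theorem pair_sublist_or_pair_sublist (ha : a ∈ l) (hb : b ∈ l) (hne : a ≠ b) :
    [a, b] <+ l ∨ [b, a] <+ l := by
  obtain ⟨i, rfl⟩ := List.get_of_mem ha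
  obtain ⟨j, rfl⟩ := List.get_of_mem hb
  rcases lt_trichotomy i j with hij | rfl | hji
  · exact .inl (pair_sublist_iff_exists_get.2 ⟨i, j, hij, rfl, rfl⟩)
  · exact absurd rfl hne
  · exact .inr (pair_sublist_iff_exists_get.2 ⟨j, i, hji, rfl, rfl⟩)

theorem pair_sublist_of_pairwise_le {K : Type*} [Preorder K] {f : β → K}
    (hl : l.Pairwise (fun a b => f a ≤ f b)) (ha : a ∈ l) (hb : b ∈ l) (hab : f a < f b) :
    [a, b] <+ l :=
  (pair_sublist_or_pair_sublist ha hb (fun h => hab.ne (congrArg f h))).resolve_right fun h =>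
    hab.not_ge (List.pairwise_iff_forall_sublist.1 hl h)

theorem pair_sublist_iff_idxOf_lt [DecidableEq β] (hl : l.Nodup) (hb : b ∈ l) :
    [a, b] <+ l ↔ l.idxOf a < l.idxOf b := by
  rw [pair_sublist_iff_exists_get]
  constructor
  · rintro ⟨i, j, hij, rfl, rfl⟩
    simpa [hl.idxOf_getElem] using hij
  · intro h
    have hb' := List.idxOf_lt_length_of_mem hb
    exact ⟨⟨l.idxOf a, h.trans hb'⟩, ⟨l.idxOf b, hb'⟩, h, by simp, by simp⟩

theorem not_pair_sublist_swap (hl : l.Nodup) (hab : [a, b] <+ l) : ¬ [b, a] <+ l := by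
  classical
  rw [pair_sublist_iff_idxOf_lt hl (hab.subset (by simp))] at hab
  rw [pair_sublist_iff_idxOf_lt hl (List.idxOf_lt_length_iff.1
    (hab.trans_le List.idxOf_le_length))]
  exact hab.asymm

theorem eq_of_perm_of_pairwise_le_of_pairwise_lt {K : Type*} [PartialOrder K] {f : β → K}
    {l' : List β} (hperm : l ~ l') (hl : l.Pairwise (fun a b => f a ≤ f b))
    (hl' : l'.Pairwise (fun a b => f a < f b)) : l = l' := by
  have hne : l.Pairwise (fun a b => f a ≠ f b) :=
    (hperm.pairwise_iff fun h => h.symm).2 (hl'.imp ne_of_lt)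
  have hlt : l.Pairwise (fun a b => f a < f b) :=
    (hl.and hne).imp fun h => lt_of_le_of_ne h.1 h.2
  exact hperm.eq_of_pairwise (fun _ _ _ _ h h' => absurd h' h.asymm) hlt hl'

theorem pairwise_le_insertionSort {K : Type*} [LinearOrder K] (f : β → K) (l : List β) :
    (l.insertionSort fun a b => f a ≤ f b).Pairwise fun a b => f a ≤ f b :=
  haveI : IsTrans β fun a b => f a ≤ f b := ⟨fun _ _ _ => le_trans⟩
  haveI : Std.Total fun a b : β => f a ≤ f b := ⟨fun _ _ => le_total _ _⟩
  List.pairwise_insertionSort _ l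

theorem card_filter_get_eq_length_filter (p : β → Bool) :
    (Finset.univ.filter fun i : Fin l.length => p (l.get i)).card = (l.filter p).length := by
  have hcoe : ((List.ofFn l.get : Multiset β).filter fun b => p b).card =
      (l.filter p).length := by
    rw [List.ofFn_get, Multiset.filter_coe, Multiset.coe_card]
    simp
  rw [← hcoe, ← Fin.univ_val_map, Multiset.filter_map, Multiset.card_map]
  rfl

theorem exists_orderEmbedding_filter (p : β → Bool) :
    ∃ f : Fin (l.filter p).length ↪o Fin l.length,
      (∀ i, (l.filter p).get i = l.get (f i)) ∧ ∀ j, p (l.get j) → ∃ i, f i = j := by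
  obtain ⟨f, hf⟩ := List.sublist_iff_exists_fin_orderEmbedding_get_eq.1
    (List.filter_sublist (p := p) (l := l))
  refine ⟨f, hf, fun j hj => ?_⟩
  have himage : Finset.univ.map f.toEmbedding =
      Finset.univ.filter fun i => p (l.get i) := by
    refine Finset.eq_of_subset_of_card_le (fun j hj => ?_) ?_
    · obtain ⟨i, -, rfl⟩ := Finset.mem_map.1 hj
      have hp := List.of_mem_filter (List.get_mem (l.filter p) i)
      rw [hf i] at hp
      exact Finset.mem_filter.2 ⟨Finset.mem_univ _, hp⟩
    · rw [card_filter_get_eq_length_filter, Finset.card_map, Finset.card_fin]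
  have hmem : j ∈ Finset.univ.map f.toEmbedding := by
    rw [himage]
    simpa using hj
  simpa using hmem

end Lists

theorem legal_of_forall_legal_regSub {S : Hist} (h : ∀ x, Legal (regSub S x)) : Legal S := by
  intro k hinv hread
  obtain ⟨x, hx⟩ : ∃ x, (S.get k).reg = x := ⟨_, rfl⟩
  obtain ⟨f, hget, hsurj⟩ := exists_orderEmbedding_filter (l := S) fun e => decide (e.reg = x)
  obtain ⟨k, rfl⟩ := hsurj k (decide_eq_true hx)
  have hlegal := h x k
  simp only [regSub, hget] at hlegal
  rcases hlegal hinv hread with ⟨j, hjk, hj, hjw, hjr, hjv, hlast⟩ | ⟨hzero, hnone⟩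
  · refine .inl ⟨f j, f.lt_iff_lt.2 hjk, hj, hjw, hjr, hjv, fun l hjl hlk hl hlw hlr => ?_⟩
    obtain ⟨l, rfl⟩ := hsurj l (decide_eq_true (hlr.trans hx))
    exact hlast l (f.lt_iff_lt.1 hjl) (f.lt_iff_lt.1 hlk) hl hlw hlr
  · refine .inr ⟨hzero, fun j hjk hj hjw hjr => ?_⟩
    obtain ⟨j, rfl⟩ := hsurj j (decide_eq_true (hjr.trans hx))
    exact hnone j (f.lt_iff_lt.1 hjk) hj hjw hjr

/-- The response event matching an invocation event. Since `value` already carries what a read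
returns, it is determined by the invocation. -/
def Event.response (e : Event) : Event := { e with isInv := false }

/-- The invocation events of a history, standing for its operations. -/
def invocations (H : Hist) : List Event := H.filter Event.isInv

/-- The complete sequential history executing the operations invoked by `P` one after another. -/
def sequentialHist (P : List Event) : Hist := P.flatMap fun a => [a, a.response]

theorem matches_iff_eq_response {a b : Event} :
    Matches a b ↔ a.isInv = true ∧ b = a.response := by
  cases a; cases b
  simp only [Matches, Event.response, Event.mk.injEq]
  grind

theorem mem_invocations {H : Hist} {e : Event} :
    e ∈ invocations H ↔ e ∈ H ∧ e.isInv = true :=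
  List.mem_filter

theorem eq_of_response_eq {a b : Event} (ha : a.isInv = true) (hb : b.isInv = true)
    (h : a.response = b.response) : a = b := by
  cases a; cases b
  simp_all [Event.response]

section SequentialHist

variable {P : List Event} {a b : Event}

theorem isSequential_sequentialHist (hP : ∀ a ∈ P, a.isInv = true) :
    IsSequential (sequentialHist P) := by
  induction P with
  | nil => exact .nil
  | cons a P ih =>
    rw [List.forall_mem_cons] at hP
    exact .cons _ _ _ (matches_iff_eq_response.2 ⟨hP.1, rfl⟩) (ih hP.2)

theorem filter_sequentialHist {q : Event → Bool} (hq : ∀ e, q e.response = q e) :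
    (sequentialHist P).filter q = sequentialHist (P.filter q) := by
  induction P with
  | nil => rfl
  | cons a P ih =>
    have hcons (P) : sequentialHist (a :: P) = a :: a.response :: sequentialHist P := rfl
    cases h : q a <;> simp [hcons, ih, hq, h]

theorem invocations_sequentialHist (hP : ∀ a ∈ P, a.isInv = true) :
    invocations (sequentialHist P) = P := by
  induction P with
  | nil => rfl
  | cons a P ih =>
    rw [List.forall_mem_cons] at hP
    have htail : (sequentialHist P).filter Event.isInv = P := ih hP.2
    simpa [invocations, sequentialHist, hP.1, Event.response] using htail

theorem mem_sequentialHist {e : Event} :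
    e ∈ sequentialHist P ↔ e ∈ P ∨ ∃ a ∈ P, e = a.response := by
  simp only [sequentialHist, List.mem_flatMap, List.mem_cons, List.not_mem_nil, or_false]
  grind

theorem response_pair_sublist_sequentialHist (h : [a, b] <+ P) :
    [a.response, b] <+ sequentialHist P :=
  List.Sublist.trans (by simp) (h.flatMap fun a => [a, a.response])

theorem pair_response_sublist_sequentialHist (hP : P.Nodup) (ha : a ∈ P) (hb : b ∈ P)
    (hab : P.idxOf a ≤ P.idxOf b) : [a, b.response] <+ sequentialHist P := by
  rcases hab.eq_or_lt with heq | hlt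
  · obtain rfl := (List.idxOf_inj ha).1 heq
    exact (List.singleton_sublist.2 ha).flatMap fun a => [a, a.response]
  · have hpair : [a, b] <+ P := (pair_sublist_iff_idxOf_lt hP hb).2 hlt
    exact List.Sublist.trans (by simp) (hpair.flatMap fun a => [a, a.response])

end SequentialHist

theorem UniqueEvents.nodup {H : Hist} (h : UniqueEvents H) : H.Nodup :=
  h.imp fun hne heq => hne (by simp [heq])

theorem UniqueEvents.perm {H H' : Hist} (h : UniqueEvents H) (hperm : H ~ H') : UniqueEvents H' :=
  hperm.pairwise h fun hne heq => hne ⟨heq.1.symm, heq.2.symm⟩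

theorem HEquiv.perm {H H' : Hist} (h : HEquiv H H') : H ~ H' := by
  rw [List.perm_iff_count]
  intro e
  have hcount := congrArg (List.count e) (h e.proc)
  rwa [procSub, procSub, List.count_filter (by simp), List.count_filter (by simp)] at hcount

theorem hEquiv_of_perm_of_pairwise_lt {K : Type*} [Preorder K] {key : Event → K} {H H' : Hist}
    (hperm : H ~ H') (hH : H.Pairwise fun a b => key a < key b)
    (hH' : ∀ p, (procSub H' p).Pairwise fun a b => key a < key b) : HEquiv H H' := fun p =>
  (hperm.filter _).eq_of_pairwise (fun _ _ _ _ h h' => absurd h' h.asymm)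
    (hH.sublist List.filter_sublist) (hH' p)

theorem WellFormed.of_hEquiv {H H' : Hist} (hH : WellFormed H) (h : HEquiv H H') :
    WellFormed H' := by
  obtain ⟨hunique, hcoherent, hseq⟩ := hH
  refine ⟨hunique.perm h.perm, fun e he e' he' => ?_, fun p => h p ▸ hseq p⟩
  exact hcoherent e (h.perm.mem_iff.2 he) e' (h.perm.mem_iff.2 he')

theorem SC.of_hEquiv {H H' : Hist} (hH : SC H) (h : HEquiv H H') : SC H' := by
  obtain ⟨S, hseq, hlegal, hS⟩ := hH
  exact ⟨S, hseq, hlegal, fun p => (hS p).trans (h p)⟩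

theorem LIN.sc {H : Hist} (h : LIN H) : SC H := by
  obtain ⟨S, hseq, hlegal, hS, -⟩ := h
  exact ⟨S, hseq, hlegal, hS⟩

theorem complete_iff_response_mem {H : Hist} :
    Complete H ↔ ∀ e ∈ H, e.isInv = true → e.response ∈ H := by
  simp only [Complete, matches_iff_eq_response]
  grind

theorem Complete.perm {H H' : Hist} (h : Complete H) (hperm : H ~ H') : Complete H' := by
  simpa only [Complete, hperm.mem_iff] using h

theorem Complete.filter {H : Hist} (h : Complete H) {q : Event → Bool}
    (hq : ∀ e, q e.response = q e) : Complete (H.filter q) := by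
  rw [complete_iff_response_mem] at h ⊢
  intro e he hinv
  rw [List.mem_filter] at he ⊢
  exact ⟨h e he.1 hinv, (hq e).trans he.2⟩

theorem IsSequential.exists_eq_sequentialHist {S : Hist} (hS : IsSequential S) :
    ∃ P : List Event, (∀ a ∈ P, a.isInv = true) ∧
      (S = sequentialHist P ∨ ∃ e, e.isInv = true ∧ S = sequentialHist P ++ [e]) := by
  induction hS with
  | nil => exact ⟨[], by simp, .inl rfl⟩
  | single e he => exact ⟨[], by simp, .inr ⟨e, he, rfl⟩⟩
  | cons a b rest hab _ ih =>
    obtain ⟨ha, rfl⟩ := matches_iff_eq_response.1 hab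
    obtain ⟨P, hP, hrest⟩ := ih
    refine ⟨a :: P, List.forall_mem_cons.2 ⟨ha, hP⟩, ?_⟩
    rcases hrest with rfl | ⟨e, he, rfl⟩
    · exact .inl rfl
    · exact .inr ⟨e, he, rfl⟩

theorem IsSequential.sequentialHist_invocations {S : Hist} (hS : IsSequential S) (hn : S.Nodup)
    (hcom : Complete S) : sequentialHist (invocations S) = S := by
  obtain ⟨P, hP, rfl | ⟨e, he, rfl⟩⟩ := hS.exists_eq_sequentialHist
  · rw [invocations_sequentialHist hP]
  · have hresp := complete_iff_response_mem.1 hcom e (by simp) he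
    have hne : e.response ≠ e := fun h => by simpa [Event.response, he] using congrArg Event.isInv h
    have hmem : e.response ∈ sequentialHist P := by simpa [hne] using hresp
    have heP : e ∈ P := by
      rcases mem_sequentialHist.1 hmem with hresp_mem | ⟨a, ha, hea⟩
      · exact absurd (hP _ hresp_mem) (by simp [Event.response])
      · exact eq_of_response_eq he (hP a ha) hea ▸ ha
    exact absurd rfl ((List.nodup_append.1 hn).2.2 e (mem_sequentialHist.2 (.inl heP)) e (by simp))

theorem opBefore_iff_exists_pair_sublist {H : Hist} {o₁ o₂ : ℕ} :
    OpBefore H o₁ o₂ ↔ ∃ r b, [r, b] <+ H ∧ r.op = o₁ ∧ r.isInv = false ∧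
      b.op = o₂ ∧ b.isInv = true := by
  simp only [pair_sublist_iff_exists_get]
  constructor
  · rintro ⟨i, j, hij, h⟩
    exact ⟨_, _, ⟨i, j, hij, rfl, rfl⟩, h⟩
  · rintro ⟨_, _, ⟨i, j, hij, rfl, rfl⟩, h⟩
    exact ⟨i, j, hij, h⟩

theorem UniqueEvents.eq_of_op_eq {H : Hist} (h : UniqueEvents H) {e e' : Event} (he : e ∈ H)
    (he' : e' ∈ H) (hop : e.op = e'.op) (hinv : e.isInv = e'.isInv) : e = e' := by
  by_contra hne
  rcases pair_sublist_or_pair_sublist he he' hne with hpair | hpair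
  · exact List.pairwise_iff_forall_sublist.1 h hpair ⟨hop, hinv⟩
  · exact List.pairwise_iff_forall_sublist.1 h hpair ⟨hop.symm, hinv.symm⟩

theorem UniqueEvents.opBefore_iff {H : Hist} (h : UniqueEvents H) {r b : Event} (hr : r ∈ H)
    (hb : b ∈ H) (hres : r.isInv = false) (hinv : b.isInv = true) :
    OpBefore H r.op b.op ↔ [r, b] <+ H := by
  rw [opBefore_iff_exists_pair_sublist]
  constructor
  · rintro ⟨r', b', hpair, hop, hres', hop', hinv'⟩
    obtain rfl := h.eq_of_op_eq (hpair.subset (by simp)) hr hop (hres'.trans hres.symm)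
    obtain rfl := h.eq_of_op_eq (hpair.subset (by simp)) hb hop' (hinv'.trans hinv.symm)
    exact hpair
  · exact fun hpair => ⟨r, b, hpair, rfl, hres, rfl, hinv⟩

theorem LIN.exists_invocation_order {H : Hist} (hlin : LIN H) (hunique : UniqueEvents H)
    (hcom : Complete H) :
    ∃ P : List Event, P ~ invocations H ∧ Legal (sequentialHist P) ∧
      ∀ a ∈ P, ∀ b ∈ P, P.idxOf a ≤ P.idxOf b → [a, b.response] <+ H := by
  obtain ⟨S, hseq, hlegal, hequiv, hreal⟩ := hlin
  have huniqueS : UniqueEvents S := hunique.perm hequiv.perm.symm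
  have hS : sequentialHist (invocations S) = S :=
    hseq.sequentialHist_invocations huniqueS.nodup (hcom.perm hequiv.perm.symm)
  refine ⟨invocations S, hequiv.perm.filter _, hS.symm ▸ hlegal, fun a ha b hb hab => ?_⟩
  have hpairS : [a, b.response] <+ S :=
    hS ▸ pair_response_sublist_sequentialHist (huniqueS.nodup.filter _) ha hb hab
  have haH : a ∈ H := hequiv.perm.mem_iff.1 (hpairS.subset (by simp))
  have hbH : b.response ∈ H := hequiv.perm.mem_iff.1 (hpairS.subset (by simp))
  have hinv : a.isInv = true := (mem_invocations.1 ha).2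
  have hne : a ≠ b.response := fun h => by simp [h, Event.response] at hinv
  refine (pair_sublist_or_pair_sublist haH hbH hne).resolve_right fun hswap => ?_
  have hbefore : OpBefore S b.response.op a.op :=
    hreal _ _ ((hunique.opBefore_iff hbH haH rfl hinv).2 hswap)
  have hswapS : [b.response, a] <+ S :=
    (huniqueS.opBefore_iff (hpairS.subset (by simp)) (hpairS.subset (by simp)) rfl hinv).1 hbefore
  exact not_pair_sublist_swap huniqueS.nodup hpairS hswapS

/-- The linearization point of the operation invoked by `a`, when `P` lists in linearization order
the operations on its register: the latest invocation in `L` of an operation up to `a` in `P`.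
Ties are broken by the position in `P`. -/
def linearizationPoint (L : Hist) (P : List Event) (a : Event) : ℕ ×ₗ ℕ :=
  toLex ((P.toFinset.filter fun b => P.idxOf b ≤ P.idxOf a).sup L.idxOf, P.idxOf a)

theorem pairwise_linearizationPoint_lt (L : Hist) {P : List Event} (hP : P.Nodup) :
    P.Pairwise fun a b => linearizationPoint L P a < linearizationPoint L P b := by
  rw [List.pairwise_iff_forall_sublist]
  intro a b hab
  have hidx : P.idxOf a < P.idxOf b := (pair_sublist_iff_idxOf_lt hP (hab.subset (by simp))).1 hab
  refine Prod.Lex.toLex_strictMono (Prod.mk_lt_mk_of_le_of_lt (Finset.sup_mono ?_) hidx)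
  exact Finset.monotone_filter_right _ fun c _ hc => le_trans hc hidx.le

theorem linearizationPoint_lt_of_response_before {L : Hist} (hL : L.Nodup) {P Q : List Event}
    {a b : Event} (ha : a ∈ P) (hb : b ∈ Q)
    (hbefore : ∀ c ∈ P, P.idxOf c ≤ P.idxOf a → [c, a.response] <+ L)
    (hab : [a.response, b] <+ L) : linearizationPoint L P a < linearizationPoint L Q b := by
  have hresp : a.response ∈ L := hab.subset (by simp)
  have hidx : ∀ c ∈ P, P.idxOf c ≤ P.idxOf a → L.idxOf c < L.idxOf a.response := fun c hc hca =>
    (pair_sublist_iff_idxOf_lt hL hresp).1 (hbefore c hc hca)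
  refine Prod.Lex.toLex_lt_toLex.2 (.inl ?_)
  calc (P.toFinset.filter fun c => P.idxOf c ≤ P.idxOf a).sup L.idxOf
      < L.idxOf a.response := by
        rw [Finset.sup_lt_iff (bot_le.trans_lt (hidx a ha le_rfl))]
        intro c hc
        rw [Finset.mem_filter, List.mem_toFinset] at hc
        exact hidx c hc.1 hc.2
    _ < L.idxOf b := (pair_sublist_iff_idxOf_lt hL (hab.subset (by simp))).1 hab
    _ ≤ (Q.toFinset.filter fun c => Q.idxOf c ≤ Q.idxOf b).sup L.idxOf :=
        Finset.le_sup (f := L.idxOf) (Finset.mem_filter.2 ⟨List.mem_toFinset.2 hb, le_rfl⟩)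

section Serialize

variable {K : Type*} [LinearOrder K] {key : Event → K} {L : Hist}

/-- The sequential history executing the operations of `L` in increasing order of the keys of
their invocations. -/
def serialize (key : Event → K) (L : Hist) : Hist :=
  sequentialHist ((invocations L).insertionSort fun a b => key a ≤ key b)

/-- The keys of operations extend the real-time order of `L`: an operation that responds before
another is invoked has the smaller key. -/
def RespectsRealTime (key : Event → K) (L : Hist) : Prop :=
  ∀ a ∈ invocations L, ∀ b ∈ invocations L, [a.response, b] <+ L → key a < key b

theorem isSequential_serialize : IsSequential (serialize key L) :=
  isSequential_sequentialHist fun _ ha => (mem_invocations.1 (List.mem_insertionSort _ |>.1 ha)).2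

theorem filter_serialize {q : Event → Bool} (hq : ∀ e, q e.response = q e) {P : List Event}
    (hperm : P ~ invocations (L.filter q)) (hP : P.Pairwise fun a b => key a < key b) :
    (serialize key L).filter q = sequentialHist P := by
  rw [serialize, filter_sequentialHist hq]
  congr 1
  refine eq_of_perm_of_pairwise_le_of_pairwise_lt ?_
    ((pairwise_le_insertionSort key _).sublist List.filter_sublist) hP
  calc ((invocations L).insertionSort fun a b => key a ≤ key b).filter q
      ~ (invocations L).filter q := (List.perm_insertionSort _ _).filter q
    _ = invocations (L.filter q) := List.filter_comm ..
    _ ~ P := hperm.symm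

theorem WellFormed.sequentialHist_invocations_procSub (hwf : WellFormed L) (hcom : Complete L)
    (p : ℕ) : sequentialHist (invocations (procSub L p)) = procSub L p :=
  (hwf.2.2 p).sequentialHist_invocations (hwf.1.nodup.filter _) (hcom.filter fun _ => rfl)

theorem RespectsRealTime.hEquiv_serialize (hkey : RespectsRealTime key L) (hwf : WellFormed L)
    (hcom : Complete L) : HEquiv (serialize key L) L := by
  intro p
  have hseq := hwf.sequentialHist_invocations_procSub hcom p
  have hsub : invocations (procSub L p) <+ invocations L := List.filter_sublist.filter _
  have hsorted : (invocations (procSub L p)).Pairwise fun a b => key a < key b := by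
    rw [List.pairwise_iff_forall_sublist]
    intro a b hab
    have hpair : [a.response, b] <+ procSub L p := hseq ▸ response_pair_sublist_sequentialHist hab
    exact hkey a (hsub.subset (hab.subset (by simp))) b (hsub.subset (hab.subset (by simp)))
      (hpair.trans List.filter_sublist)
  exact (filter_serialize (fun _ => rfl) (.refl _) hsorted).trans hseq

theorem WellFormed.exists_invocation_of_response_mem (hwf : WellFormed L) (hcom : Complete L)
    {r : Event} (hr : r ∈ L) (hres : r.isInv = false) : ∃ a ∈ invocations L, r = a.response := by
  have hmem : r ∈ procSub L r.proc := List.mem_filter.2 ⟨hr, by simp⟩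
  rw [← hwf.sequentialHist_invocations_procSub hcom, mem_sequentialHist] at hmem
  rcases hmem with hinv | ⟨a, ha, rfl⟩
  · exact absurd (mem_invocations.1 hinv).2 (by simp [hres])
  · exact ⟨a, (List.filter_sublist.filter _).subset ha, rfl⟩

theorem RespectsRealTime.opBefore_serialize (hkey : RespectsRealTime key L) (hwf : WellFormed L)
    (hcom : Complete L) {o₁ o₂ : ℕ} (h : OpBefore L o₁ o₂) : OpBefore (serialize key L) o₁ o₂ := by
  rw [opBefore_iff_exists_pair_sublist] at h ⊢
  obtain ⟨r, b, hpair, hop₁, hres, hop₂, hinv⟩ := h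
  obtain ⟨a, ha, rfl⟩ :=
    hwf.exists_invocation_of_response_mem hcom (hpair.subset (by simp)) hres
  have hb : b ∈ invocations L := mem_invocations.2 ⟨hpair.subset (by simp), hinv⟩
  have hab : [a, b] <+ (invocations L).insertionSort fun a b => key a ≤ key b :=
    pair_sublist_of_pairwise_le (pairwise_le_insertionSort key _)
      ((List.mem_insertionSort _).2 ha) ((List.mem_insertionSort _).2 hb) (hkey a ha b hb hpair)
  exact ⟨a.response, b, response_pair_sublist_sequentialHist hab, hop₁, hres, hop₂, hinv⟩

theorem RespectsRealTime.lin (hkey : RespectsRealTime key L) (hwf : WellFormed L)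
    (hcom : Complete L) (hlegal : Legal (serialize key L)) : LIN L :=
  ⟨serialize key L, isSequential_serialize, hlegal, hkey.hEquiv_serialize hwf hcom,
    fun _ _ => hkey.opBefore_serialize hwf hcom⟩

end Serialize

theorem lin_of_forall_lin_regSub {L : Hist} (hwf : WellFormed L) (hcom : Complete L)
    (hlin : ∀ x, LIN (regSub L x)) : LIN L := by
  have horder (x : ℕ) := (hlin x).exists_invocation_order (hwf.1.sublist List.filter_sublist)
    (hcom.filter fun _ => rfl)
  choose P hperm hlegal hbefore using horder
  have hreg {x : ℕ} {a : Event} (ha : a ∈ P x) : a.reg = x :=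
    of_decide_eq_true (List.mem_filter.1 (mem_invocations.1 ((hperm x).mem_iff.1 ha)).1).2
  have hmem {a : Event} (ha : a ∈ invocations L) : a ∈ P a.reg := by
    rw [(hperm _).mem_iff, mem_invocations]
    exact ⟨List.mem_filter.2 ⟨(mem_invocations.1 ha).1, by simp⟩, (mem_invocations.1 ha).2⟩
  let key (a : Event) := linearizationPoint L (P a.reg) a
  have hkey : RespectsRealTime key L := fun a ha b hb hab =>
    linearizationPoint_lt_of_response_before hwf.1.nodup (hmem ha) (hmem hb)
      (fun c hc hca => (hbefore _ c hc a (hmem ha) hca).trans List.filter_sublist) hab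
  have hnodup (x : ℕ) : (P x).Nodup :=
    (hperm x).nodup_iff.2 ((hwf.1.nodup.filter _).filter _)
  have hsorted (x : ℕ) : (P x).Pairwise fun a b => key a < key b :=
    (pairwise_linearizationPoint_lt L (hnodup x)).imp_of_mem fun ha hb h => by
      simpa only [key, hreg ha, hreg hb] using h
  have hregSub (x : ℕ) : regSub (serialize key L) x = sequentialHist (P x) :=
    filter_serialize (fun _ => rfl) (hperm x) (hsorted x)
  exact hkey.lin hwf hcom (legal_of_forall_legal_regSub fun x => hregSub x ▸ hlegal x)

theorem lt_lin_compositional_implies_sc_general {K : Type*} [Preorder K] {H Hlt : Hist}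
    (hwf : WellFormed H) (hcom : Complete H) (key : Event → K)
    (hmono : ∀ p, (procSub H p).Pairwise fun a b => key a < key b)
    (hperm : Hlt ~ H) (hsorted : Hlt.Pairwise fun a b => key a < key b)
    (hlin : ∀ x, LIN (regSub Hlt x)) : SC H := by
  have hequiv : HEquiv Hlt H := hEquiv_of_perm_of_pairwise_lt hperm hsorted hmono
  have hlinlt : LIN Hlt :=
    lin_of_forall_lin_regSub (hwf.of_hEquiv fun p => (hequiv p).symm) (hcom.perm hperm.symm) hlin
  exact hlinlt.sc.of_hEquiv hequiv

/-- Let `H` be a well-formed complete history with a logical-time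
key assignment `lt` as above, and let `H^lt` be the sequence of the same
events sorted in increasing lexicographic key order.  If for every register
`x` the register subhistory `H^lt|x` is linearizable, then `H` is sequentially
consistent. -/
theorem lt_lin_compositional_implies_sc (H : Hist)
    (hwf : WellFormed H) (hcom : Complete H)
    (lt : Event → ℕ × ℕ)
    (hproc : ∀ e ∈ H, (lt e).2 = e.proc)
    (hdist : H.Pairwise (fun e1 e2 => lt e1 ≠ lt e2))
    (hmono : ∀ p : ℕ, (procSub H p).Pairwise (fun e1 e2 => (lt e1).1 < (lt e2).1))
    (Hlt : Hist) (hlt : IsLtHistory H lt Hlt)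
    (hlin : ∀ x : ℕ, LIN (regSub Hlt x)) :
    SC H := by
  exact lt_lin_compositional_implies_sc_general hwf hcom (fun e => toLex (lt e))
    (fun p => (hmono p).imp fun h => Prod.Lex.toLex_lt_toLex.2 (.inl h)) hlt.1 hlt.2 hlin
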